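/- Let p > 5 be a prime. Assume the numbers log Γ(a/p), 1 ≤ a ≤ p-1, are linearly independent over Q̄. Let f_1, …, f_r (r ≥ 2) be Q̄-valued, odd, p-periodic, Q̄-linearly independent functions with f̂_j(p) = 0 and L(1,f_j) = 0 for all j. Then at most one of the numbers L'(1,f_1), …, L'(1,f_r) is algebraic. -/

import Mathlib

open Finset Filter Topology

lemma aux_hasDeriv (n : ℕ) (s : ℂ) (x : ℝ) (hx : 0 < x) :
    HasDerivAt (fun y : ℝ => ((n : ℂ) + (y : ℂ)) ^ (-s)) (-s * ((n : ℂ) + (x : ℂ)) ^ (-s - 1)) x := by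
  have h1 : HasDerivAt (fun z : ℂ => ((n : ℂ) + z) ^ (-s)) (-s * ((n : ℂ) + (x : ℂ)) ^ (-s - 1) * 1) (x : ℂ) := by
    refine HasDerivAt.cpow_const ((hasDerivAt_id (x : ℂ)).const_add _) ?_
    left
    simp
    positivity
  rw [mul_one] at h1
  exact h1.comp_ofReal

lemma aux_norm (n : ℕ) (x : ℝ) (hx : 0 < x) (s : ℂ) :
    ‖((n : ℂ) + (x : ℂ)) ^ s‖ = ((n : ℝ) + x) ^ s.re := by
  rw [← Complex.norm_cpow_eq_rpow_re_of_pos (by positivity)]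
  push_cast
  rfl

lemma aux_taylor (δ X : ℝ) (hδ : 0 < δ) (hδ1 : δ ≤ 1) (s : ℂ) (hs : -1/2 < s.re) (hs3 : ‖s‖ < 3)
    (n : ℕ) (x : ℝ) (hx : x ∈ Set.Icc δ X) :
    ‖((n : ℂ) + (x : ℂ)) ^ (-s) - ((n : ℂ) + (δ : ℂ)) ^ (-s)
      - (-s * ((n : ℂ) + (δ : ℂ)) ^ (-s - 1)) * ((x : ℂ) - δ)‖
      ≤ 12 * δ ^ (-4 : ℝ) * (X - δ) ^ 2 * ((n : ℝ) + δ) ^ (-3/2 : ℝ) := by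
  set M : ℝ := 12 * δ ^ (-4 : ℝ) * ((n : ℝ) + δ) ^ (-3/2 : ℝ) with hM
  have hM0 : 0 ≤ M := by positivity
  have hδX : δ ≤ X := hx.1.trans hx.2
  -- second derivative bound
  have h2 : ∀ y ∈ Set.Icc δ X, ‖(-s) * ((-s - 1) * ((n : ℂ) + (y : ℂ)) ^ (-s - 1 - 1))‖ ≤ M := by
    intro y hy
    have hy0 : 0 < y := hδ.trans_le hy.1
    rw [norm_mul, norm_mul, aux_norm n y hy0]
    have e1 : ‖-s‖ ≤ 3 := by rw [norm_neg]; exact hs3.le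
    have e2 : ‖-s - 1‖ ≤ 4 := by
      calc ‖-s - 1‖ ≤ ‖-s‖ + ‖(1 : ℂ)‖ := norm_sub_le _ _
        _ ≤ 4 := by rw [norm_one]; linarith
    have hre : s.re ≤ 3 := (Complex.re_le_norm s).trans hs3.le
    have e3 : ((n : ℝ) + y) ^ (-s - 1 - 1).re ≤ δ ^ (-4 : ℝ) * ((n : ℝ) + δ) ^ (-3/2 : ℝ) := by
      have : (-s - 1 - 1).re = (-(s.re + 1/2)) + (-3/2) := by simp; ring
      rw [this, Real.rpow_add (by positivity)]
      have hn : (0 : ℝ) ≤ n := Nat.cast_nonneg n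
      have a1 : ((n : ℝ) + y) ^ (-(s.re + 1/2)) ≤ δ ^ (-4 : ℝ) := by
        calc ((n : ℝ) + y) ^ (-(s.re + 1/2)) ≤ δ ^ (-(s.re + 1/2)) :=
              Real.rpow_le_rpow_of_nonpos hδ (by linarith [hy.1]) (by linarith)
          _ ≤ δ ^ (-4 : ℝ) := Real.rpow_le_rpow_of_exponent_ge hδ hδ1 (by linarith)
      have a2 : ((n : ℝ) + y) ^ (-3/2 : ℝ) ≤ ((n : ℝ) + δ) ^ (-3/2 : ℝ) :=
        Real.rpow_le_rpow_of_nonpos (by positivity) (by linarith [hy.1]) (by norm_num)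
      gcongr
    calc _ ≤ 3 * (4 * (δ ^ (-4 : ℝ) * ((n : ℝ) + δ) ^ (-3/2 : ℝ))) := by gcongr
      _ = M := by rw [hM]; ring
  have hd2 : ∀ y ∈ Set.Icc δ X, HasDerivWithinAt
      (fun y : ℝ => -s * ((n : ℂ) + (y : ℂ)) ^ (-s - 1))
      ((-s) * ((-s - 1) * ((n : ℂ) + (y : ℂ)) ^ (-s - 1 - 1))) (Set.Icc δ X) y := by
    intro y hy
    have := aux_hasDeriv n (s + 1) y (hδ.trans_le hy.1)
    have h3 := (this.const_mul (-s)).hasDerivWithinAt (s := Set.Icc δ X)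
    simpa only [neg_add, ← sub_eq_add_neg] using h3
  have hmemδ : δ ∈ Set.Icc δ X := ⟨le_rfl, hδX⟩
  have h1 : ∀ y ∈ Set.Icc δ X, ‖-s * ((n : ℂ) + (y : ℂ)) ^ (-s - 1)
      - -s * ((n : ℂ) + (δ : ℂ)) ^ (-s - 1)‖ ≤ M * (X - δ) := by
    intro y hy
    refine ((convex_Icc δ X).norm_image_sub_le_of_norm_hasDerivWithin_le hd2 h2 hmemδ hy).trans ?_
    rw [Real.norm_of_nonneg (by linarith [hy.1])]
    gcongr
    exact hy.2
  have hd1 : ∀ y ∈ Set.Icc δ X, HasDerivWithinAt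
      (fun y : ℝ => ((n : ℂ) + (y : ℂ)) ^ (-s) - (-s * ((n : ℂ) + (δ : ℂ)) ^ (-s - 1)) * (y : ℂ))
      (-s * ((n : ℂ) + (y : ℂ)) ^ (-s - 1) - -s * ((n : ℂ) + (δ : ℂ)) ^ (-s - 1))
      (Set.Icc δ X) y := by
    intro y hy
    have a := aux_hasDeriv n s y (hδ.trans_le hy.1)
    have b := (HasDerivAt.ofReal_comp (hasDerivAt_id y)).const_mul
      (-s * ((n : ℂ) + (δ : ℂ)) ^ (-s - 1))
    exact ((a.sub b).congr_deriv (by simp)).hasDerivWithinAt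
  have h0 := (convex_Icc δ X).norm_image_sub_le_of_norm_hasDerivWithin_le hd1 h1 hmemδ hx
  calc _ = _ := by congr 1; ring
    _ ≤ _ := h0
    _ ≤ M * (X - δ) * (X - δ) := by
      rw [Real.norm_of_nonneg (by linarith [hx.1])]
      have : 0 ≤ X - δ := by linarith
      gcongr
      exact hx.2
    _ = _ := by rw [hM]; ring

lemma aux_bound {ι : Type*} [Fintype ι] (δ X : ℝ) (hδ : 0 < δ) (hδ1 : δ ≤ 1) (x : ι → ℝ)
    (hx : ∀ i, x i ∈ Set.Icc δ X) (w : ι → ℂ) (hw : ∑ i, w i = 0) (hwx : ∑ i, w i * x i = 0)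
    (s : ℂ) (hs : -1/2 < s.re) (hs3 : ‖s‖ < 3) (n : ℕ) :
    ‖∑ i, w i * ((n : ℂ) + (x i : ℂ)) ^ (-s)‖ ≤
      ((∑ i, ‖w i‖) * (12 * δ ^ (-4 : ℝ) * (X - δ) ^ 2)) * ((n : ℝ) + δ) ^ (-3/2 : ℝ) := by
  have key : ∑ i, w i * ((n : ℂ) + (x i : ℂ)) ^ (-s) = ∑ i, w i *
      (((n : ℂ) + (x i : ℂ)) ^ (-s) - ((n : ℂ) + (δ : ℂ)) ^ (-s)
      - (-s * ((n : ℂ) + (δ : ℂ)) ^ (-s - 1)) * ((x i : ℂ) - δ)) := by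
    set A := ((n : ℂ) + (δ : ℂ)) ^ (-s)
    set B := (-s * ((n : ℂ) + (δ : ℂ)) ^ (-s - 1))
    have : ∀ i, w i * (((n : ℂ) + (x i : ℂ)) ^ (-s) - A - B * ((x i : ℂ) - δ)) =
      w i * ((n : ℂ) + (x i : ℂ)) ^ (-s) - w i * A - ((w i * x i) * B - w i * (B * δ)) := by
      intro i; ring
    simp_rw [this, sum_sub_distrib, ← sum_mul, hw, hwx]
    ring
  rw [key, mul_assoc, sum_mul]
  refine norm_sum_le_of_le _ fun i _ => ?_
  rw [norm_mul]
  gcongr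
  exact aux_taylor δ X hδ hδ1 s hs hs3 n (x i) (hx i)

lemma aux_summable (δ : ℝ) (hδ : 0 < δ) (C : ℝ) :
    Summable fun n : ℕ => C * ((n : ℝ) + δ) ^ (-3/2 : ℝ) := by
  apply Summable.mul_left
  have := (Real.summable_one_div_nat_add_rpow δ (3/2)).mpr (by norm_num)
  refine this.congr fun n => ?_
  rw [abs_of_pos (by positivity), neg_div, Real.rpow_neg (by positivity), one_div]

lemma aux_logGamma {ι : Type*} [Fintype ι] (x : ι → ℝ)
    (hx : ∀ i, 0 < x i) (w : ι → ℂ) (hw : ∑ i, w i = 0) (hwx : ∑ i, w i * x i = 0) :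
    Tendsto (fun n : ℕ => ∑ m ∈ range (n + 1), ∑ i, w i * -(Real.log (m + x i) : ℂ)) atTop
      (𝓝 (∑ i, w i * (Real.log (Real.Gamma (x i)) : ℂ))) := by
  have h : ∀ i, Tendsto (fun n => w i * (Real.BohrMollerup.logGammaSeq (x i) n : ℂ)) atTop
      (𝓝 (w i * (Real.log (Real.Gamma (x i)) : ℂ))) := fun i =>
    ((Complex.continuous_ofReal.tendsto _).comp
      (Real.BohrMollerup.tendsto_log_gamma (hx i))).const_mul _
  refine (tendsto_finsetSum univ fun i _ => h i).congr fun n => ?_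
  rw [sum_comm]
  simp only [Real.BohrMollerup.logGammaSeq, Complex.ofReal_add, Complex.ofReal_sub,
    Complex.ofReal_mul, Complex.ofReal_sum]
  have : ∀ i, w i * ((x i : ℂ) * (Real.log n : ℂ) + (Real.log (n.factorial : ℝ) : ℂ)
      - ∑ m ∈ range (n + 1), (Real.log (x i + m) : ℂ)) =
      (w i * x i) * (Real.log n : ℂ) + w i * (Real.log (n.factorial : ℝ) : ℂ)
      + ∑ m ∈ range (n + 1), w i * -(Real.log (m + x i) : ℂ) := by
    intro i
    rw [← mul_sum, sum_neg_distrib]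
    simp_rw [add_comm (x i)]
    ring
  simp_rw [this, sum_add_distrib, ← sum_mul, hw, hwx]
  ring

/-- the main analytic lemma -/
lemma aux_main {ι : Type*} [Fintype ι] (δ X : ℝ) (hδ : 0 < δ) (hδ1 : δ ≤ 1) (x : ι → ℝ)
    (hx : ∀ i, x i ∈ Set.Icc δ X) (w : ι → ℂ) (hw : ∑ i, w i = 0) (hwx : ∑ i, w i * x i = 0)
    (F : ℂ → ℂ) (hF : Differentiable ℂ F)
    (hFs : ∀ s : ℂ, 1 < s.re → HasSum (fun n : ℕ => ∑ i, w i * ((n : ℂ) + (x i : ℂ)) ^ (-s)) (F s)) :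
    F 0 = 0 ∧ deriv F 0 = ∑ i, w i * (Real.log (Real.Gamma (x i)) : ℂ) := by
  set U : Set ℂ := {s | -1/2 < s.re} ∩ Metric.ball 0 3 with hU
  set t : ℕ → ℂ → ℂ := fun n s => ∑ i, w i * ((n : ℂ) + (x i : ℂ)) ^ (-s) with ht
  have hUo : IsOpen U := (isOpen_lt continuous_const Complex.continuous_re).inter Metric.isOpen_ball
  have hUc : Convex ℝ U := (convex_halfSpace_re_gt _).inter (convex_ball _ _)
  have h0U : (0 : ℂ) ∈ U := by simp [hU]; norm_num
  have h2U : (2 : ℂ) ∈ U := by simp [hU]; norm_num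
  have hpos : ∀ i, 0 < x i := fun i => hδ.trans_le (hx i).1
  have hne : ∀ (n : ℕ) i, ((n : ℂ) + (x i : ℂ)) ≠ 0 := by
    intro n i
    have : (0 : ℝ) < n + x i := by have := hpos i; positivity
    exact_mod_cast this.ne'
  have hderiv : ∀ (n : ℕ) (s : ℂ), HasDerivAt (t n)
      (∑ i, w i * (((n : ℂ) + (x i : ℂ)) ^ (-s) * Complex.log ((n : ℂ) + (x i : ℂ)) * -1)) s := by
    intro n s
    refine HasDerivAt.fun_sum fun i _ => HasDerivAt.const_mul _ ?_
    exact (hasDerivAt_neg s).const_cpow (Or.inl (hne n i))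
  set u : ℕ → ℝ := fun n =>
    ((∑ i, ‖w i‖) * (12 * δ ^ (-4 : ℝ) * (X - δ) ^ 2)) * ((n : ℝ) + δ) ^ (-3/2 : ℝ)
  have hu : Summable u := aux_summable δ hδ _
  have hbd : ∀ (n : ℕ) (s : ℂ), s ∈ U → ‖t n s‖ ≤ u n := by
    intro n s hs
    exact aux_bound δ X hδ hδ1 x hx w hw hwx s hs.1 (by simpa using hs.2) n
  have htd : ∀ n, DifferentiableOn ℂ (t n) U := fun n s _ =>
    (hderiv n s).differentiableAt.differentiableWithinAt
  have hG := Complex.differentiableOn_tsum_of_summable_norm hu htd hUo hbd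
  have hG' := Complex.hasSum_deriv_of_summable_norm hu htd hUo hbd h0U
  have heq : Set.EqOn F (fun s => ∑' n, t n s) U := by
    refine AnalyticOnNhd.eqOn_of_preconnected_of_eventuallyEq
      (hF.differentiableOn.analyticOnNhd hUo) (hG.analyticOnNhd hUo) hUc.isPreconnected h2U ?_
    have : {s : ℂ | 1 < s.re} ∈ 𝓝 (2 : ℂ) :=
      (isOpen_lt continuous_const Complex.continuous_re).mem_nhds (by simp)
    filter_upwards [this] with s hs
    exact (hFs s hs).tsum_eq.symm
  have hev : F =ᶠ[𝓝 0] (fun s => ∑' n, t n s) := heq.eventuallyEq_of_mem (hUo.mem_nhds h0U)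
  refine ⟨?_, ?_⟩
  · rw [heq h0U]
    simp [ht, hw]
  · rw [hev.deriv_eq]
    have h1 := hG'.tendsto_sum_nat.comp (tendsto_add_atTop_nat 1)
    refine tendsto_nhds_unique h1 ((aux_logGamma x hpos w hw hwx).congr fun n => ?_)
    refine sum_congr rfl fun m _ => ?_
    rw [(hderiv m 0).deriv]
    refine sum_congr rfl fun i _ => ?_
    rw [neg_zero, Complex.cpow_zero, Complex.ofReal_log (by have := hpos i; positivity)]
    push_cast
    ring

open scoped ZMod in
lemma aux_double {N : ℕ} [NeZero N] (Φ : ZMod N → ℂ) (hΦ : Φ.Odd)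
    (h0 : ZMod.LFunction Φ 1 = 0) (h1 : HasDerivAt (ZMod.LFunction Φ) 0 1) :
    ZMod.LFunction (ZMod.dft Φ) 0 = 0 ∧ HasDerivAt (ZMod.LFunction (ZMod.dft Φ)) 0 0 := by
  have hmul : ∀ (f g : ℂ → ℂ) (a : ℂ), (f a = 0 ∧ HasDerivAt f 0 a) → DifferentiableAt ℂ g a →
      (f a * g a = 0 ∧ HasDerivAt (fun s => f s * g s) 0 a) := by
    intro f g a hf hg
    refine ⟨by simp [hf.1], (hf.2.mul hg.hasDerivAt).congr_deriv (by simp [hf.1])⟩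
  have hN : (N : ℂ) ≠ 0 := by exact_mod_cast NeZero.ne N
  have hG : DifferentiableAt ℂ (fun s => Complex.Gammaℝ (s + 1)) 1 := by
    have h := ((Complex.differentiable_Gammaℝ_inv.comp
      (differentiable_id.add_const (1 : ℂ))).differentiableAt (x := 1)).inv
      (by
        simp only [Function.comp]
        exact inv_ne_zero (Complex.Gammaℝ_ne_zero_of_re_pos (by simp)))
    simpa [Function.comp_def, Pi.inv_def] using! h
  have c1 : ZMod.completedLFunction Φ 1 = 0 ∧ HasDerivAt (ZMod.completedLFunction Φ) 0 1 := by
    have a := hmul _ _ 1 ⟨h0, h1⟩ hG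
    have e : ∀ s : ℂ, 0 < s.re → ZMod.completedLFunction Φ s =
        ZMod.LFunction Φ s * Complex.Gammaℝ (s + 1) := by
      intro s hs
      rw [ZMod.LFunction_eq_completed_div_gammaFactor_odd hΦ, div_mul_cancel₀]
      exact Complex.Gammaℝ_ne_zero_of_re_pos (by simp; linarith)
    refine ⟨by rw [e 1 (by simp)]; exact a.1, a.2.congr_of_eventuallyEq ?_⟩
    have : {s : ℂ | 0 < s.re} ∈ 𝓝 (1 : ℂ) :=
      (isOpen_lt continuous_const Complex.continuous_re).mem_nhds (by simp)
    filter_upwards [this] with s hs using e s hs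
  have c2 : (fun s => ZMod.completedLFunction Φ (1 - s)) 0 = 0 ∧
      HasDerivAt (fun s => ZMod.completedLFunction Φ (1 - s)) 0 0 := by
    refine ⟨by simpa using c1.1, ?_⟩
    have h : HasDerivAt (ZMod.completedLFunction Φ) 0 (1 - 0) := by simpa using c1.2
    simpa using h.comp_const_sub 1 0
  have c3 : ZMod.completedLFunction (ZMod.dft Φ) 0 = 0 ∧
      HasDerivAt (ZMod.completedLFunction (ZMod.dft Φ)) 0 0 := by
    have a := hmul (fun s => ZMod.completedLFunction Φ (1 - s)) (fun s => ((N : ℂ) ^ (1 - s)) * Complex.I⁻¹) 0 c2 (by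
      refine DifferentiableAt.mul_const ?_ _
      exact DifferentiableAt.const_cpow (by fun_prop) (Or.inl hN))
    have e : ∀ s : ℂ, ZMod.completedLFunction (ZMod.dft Φ) s =
        ZMod.completedLFunction Φ (1 - s) * (((N : ℂ) ^ (1 - s)) * Complex.I⁻¹) := by
      intro s
      rw [ZMod.completedLFunction_one_sub_odd hΦ, show (1 - s) = -(s - 1) by ring,
        Complex.cpow_neg]
      have : (N : ℂ) ^ (s - 1) ≠ 0 := by simp [Complex.cpow_eq_zero_iff, hN]
      field_simp [Complex.I_ne_zero]
    refine ⟨by rw [e 0]; exact a.1, a.2.congr_of_eventuallyEq (Eventually.of_forall e)⟩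
  have a := hmul _ (fun s => (Complex.Gammaℝ (s + 1))⁻¹) 0 c3 (by
    exact (Complex.differentiable_Gammaℝ_inv.comp
      (differentiable_id.add_const (1 : ℂ))).differentiableAt)
  have e : ∀ s : ℂ, ZMod.LFunction (ZMod.dft Φ) s =
      ZMod.completedLFunction (ZMod.dft Φ) s * (Complex.Gammaℝ (s + 1))⁻¹ := by
    intro s
    rw [ZMod.LFunction_eq_completed_div_gammaFactor_odd (ZMod.dft_odd_iff.mpr hΦ), div_eq_mul_inv]
  exact ⟨by rw [e 0]; exact a.1, a.2.congr_of_eventuallyEq (Eventually.of_forall e)⟩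

lemma aux_sumzero {N : ℕ} [NeZero N] (h : ZMod N → ℂ) (hodd : h.Odd) : ∑ j, h j = 0 :=
  hodd.sum_eq_zero

lemma aux_gammaSum {N : ℕ} [NeZero N] (h : ZMod N → ℂ) (hodd : h.Odd)
    (h0 : ZMod.LFunction h 0 = 0) (h1 : HasDerivAt (ZMod.LFunction h) 0 0) :
    ∑ j, h j * (Real.log (Real.Gamma ((j.val : ℝ) / N)) : ℂ) = 0 := by
  have hN : (N : ℂ) ≠ 0 := by exact_mod_cast NeZero.ne N
  have hNpos : (0 : ℝ) < N := by exact_mod_cast NeZero.pos N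
  have hN1 : (1 : ℝ) ≤ N := by exact_mod_cast NeZero.one_le
  have hh0 : h 0 = 0 := by
    have := hodd 0
    rw [neg_zero] at this
    exact self_eq_neg.mp this
  have hs0 : ∑ j, h j = 0 := aux_sumzero h hodd
  set m : ℂ := ∑ j, h j * ((j.val : ℂ) / N) with hm
  set y : ZMod N → ℝ := fun j => if j = 0 then 1 else (j.val : ℝ) / N with hy
  set x : ZMod N ⊕ Bool → ℝ := Sum.elim y (fun b => if b then 1 else 2) with hx
  set w : ZMod N ⊕ Bool → ℂ := Sum.elim h (fun b => if b then m else -m) with hw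
  have hxm : ∀ i, x i ∈ Set.Icc (1 / (N : ℝ)) 2 := by
    have hle : 1 / (N : ℝ) ≤ 1 := by rw [div_le_one hNpos]; exact hN1
    rintro (j | b)
    · simp only [hx, hy, Sum.elim_inl]
      split_ifs with hj
      · exact ⟨hle, by norm_num⟩
      · have h1 : 1 ≤ j.val := Nat.one_le_iff_ne_zero.mpr (by simpa using hj)
        have h2 : j.val ≤ N := (ZMod.val_lt j).le
        have h1' : (1 : ℝ) ≤ j.val := by exact_mod_cast h1
        have h2' : (j.val : ℝ) ≤ N := by exact_mod_cast h2
        refine ⟨by gcongr, ?_⟩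
        have : (j.val : ℝ) / N ≤ 1 := by rw [div_le_one hNpos]; exact h2'
        linarith
    · cases b
      · exact ⟨by simp only [hx]; simp; simp at hle; linarith, by simp [hx]⟩
      · exact ⟨by simpa [hx] using hle, by simp [hx]⟩
  have hy' : ∀ (φ : ℝ → ℂ), ∑ j, h j * φ (y j) = ∑ j, h j * φ ((j.val : ℝ) / N) := by
    intro φ
    refine sum_congr rfl fun j _ => ?_
    by_cases hj : j = 0
    · simp [hj, hh0]
    · simp [hy, hj]
  have hw0 : ∑ i, w i = 0 := by simp [hw, Fintype.sum_sum_type, hs0]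
  have hwx : ∑ i, w i * x i = 0 := by
    have := hy' (fun t => (t : ℂ))
    simp only [hw, hx, Fintype.sum_sum_type, Sum.elim_inl, Sum.elim_inr, Fintype.sum_bool]
    rw [this]
    push_cast
    rw [← hm]
    simp
    ring
  set F : ℂ → ℂ := fun s => (N : ℂ) ^ s * ZMod.LFunction h s + m with hF
  have hFd : Differentiable ℂ F := by
    refine Differentiable.add ?_ (differentiable_const m)
    refine Differentiable.mul ?_ (ZMod.differentiable_LFunction_of_sum_zero hs0)
    exact fun s => DifferentiableAt.const_cpow (by fun_prop) (Or.inl hN)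
  have hFs : ∀ s : ℂ, 1 < s.re →
      HasSum (fun n : ℕ => ∑ i, w i * ((n : ℂ) + (x i : ℂ)) ^ (-s)) (F s) := by
    intro s hs
    have e1 : (N : ℂ) ^ s * ZMod.LFunction h s =
        ∑ j : ZMod N, h j * HurwitzZeta.hurwitzZeta (ZMod.toAddCircle j) s := by
      rw [ZMod.LFunction, ← mul_assoc, ← Complex.cpow_add _ _ hN]
      simp
    have a1 : HasSum (fun n : ℕ => ∑ j, h j * ((n : ℂ) + (y j : ℂ)) ^ (-s))
        ((N : ℂ) ^ s * ZMod.LFunction h s) := by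
      rw [e1]
      have : ∀ n : ℕ, ∑ j, h j * ((n : ℂ) + (y j : ℂ)) ^ (-s) =
          ∑ j, h j * (1 / ((n : ℂ) + (((j.val : ℝ) / N : ℝ) : ℂ)) ^ s) := by
        intro n
        rw [hy' (fun t => ((n : ℂ) + (t : ℂ)) ^ (-s))]
        simp_rw [Complex.cpow_neg, one_div]
      simp_rw [this]
      refine hasSum_sum fun j _ => HasSum.mul_left _ ?_
      rw [ZMod.toAddCircle_apply]
      refine HurwitzZeta.hasSum_hurwitzZeta_of_one_lt_re ⟨by positivity, ?_⟩ hs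
      rw [div_le_one hNpos]
      exact_mod_cast (ZMod.val_lt j).le
    have z := HurwitzZeta.hasSum_hurwitzZeta_of_one_lt_re (a := 1) ⟨zero_le_one, le_rfl⟩ hs
    have z2 := (hasSum_nat_add_iff' 1).mpr z
    have a2 := (z.sub z2).mul_left m
    have a3 := a1.add a2
    convert! a3 using 1
    · ext n
      simp only [hw, hx, Fintype.sum_sum_type, Sum.elim_inl, Sum.elim_inr, Fintype.sum_bool]
      congr 1
      simp only [Complex.cpow_neg, one_div]
      push_cast
      simp
      rw [show (n : ℂ) + 1 + 1 = n + 2 by ring]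
      ring
    · simp [hF]
  obtain ⟨r0, r1⟩ := aux_main (1 / (N : ℝ)) 2 (by positivity)
    (by rw [div_le_one hNpos]; exact hN1) x hxm w hw0 hwx F hFd hFs
  have hm0 : m = 0 := by simpa [hF, h0] using r0
  have hd : HasDerivAt F 0 0 := by
    have a : DifferentiableAt ℂ (fun s : ℂ => (N : ℂ) ^ s) 0 :=
      DifferentiableAt.const_cpow (by fun_prop) (Or.inl hN)
    exact ((a.hasDerivAt.mul h1).add_const m).congr_deriv (by simp [h0])
  rw [hd.deriv] at r1
  rw [← hy' (fun t => (Real.log (Real.Gamma t) : ℂ)), r1]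
  simp [hw, hx, Fintype.sum_sum_type, hm0]

lemma aux_alg_sum {ι : Type*} (t : Finset ι) (g : ι → ℂ) (hg : ∀ i ∈ t, IsAlgebraic ℚ (g i)) :
    IsAlgebraic ℚ (∑ i ∈ t, g i) :=
  Finset.sum_induction g (fun z => IsAlgebraic ℚ z) (fun _ _ h1 h2 => h1.add h2)
    isAlgebraic_zero hg

lemma aux_core {N : ℕ} [NeZero N]
    (hconj : ∀ c : ℕ → ℂ, (∀ a, IsAlgebraic ℚ (c a)) →
      (∑ a ∈ Finset.Icc 1 (N - 1),
        c a * (Real.log (Real.Gamma ((a : ℝ) / N)) : ℂ)) = 0 →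
      ∀ a ∈ Finset.Icc 1 (N - 1), c a = 0)
    (Φ : ZMod N → ℂ) (hodd : Φ.Odd) (halg : ∀ j, IsAlgebraic ℚ (Φ j))
    (h0 : ZMod.LFunction Φ 1 = 0) (h1 : HasDerivAt (ZMod.LFunction Φ) 0 1) : Φ = 0 := by
  obtain ⟨b0, b1⟩ := aux_double Φ hodd h0 h1
  have hoddF : (ZMod.dft Φ).Odd := ZMod.dft_odd_iff.mpr hodd
  have S := aux_gammaSum (ZMod.dft Φ) hoddF b0 b1
  have hF0 : ZMod.dft Φ 0 = 0 := by
    have := hoddF 0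
    rw [neg_zero] at this
    exact self_eq_neg.mp this
  have halgF : ∀ k, IsAlgebraic ℚ (ZMod.dft Φ k) := by
    intro k
    rw [ZMod.dft_apply]
    refine aux_alg_sum _ _ fun j _ => ?_
    rw [smul_eq_mul]
    refine IsAlgebraic.mul ?_ (halg j)
    refine IsAlgebraic.of_pow (n := N) (NeZero.pos N) ?_
    rw [← AddChar.map_nsmul_eq_pow]
    simp [isAlgebraic_one]
  have hS : ∑ a ∈ Finset.Icc 1 (N - 1), ZMod.dft Φ (a : ZMod N) *
      (Real.log (Real.Gamma ((a : ℝ) / N)) : ℂ) = 0 := by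
    rw [← S, ← Finset.sum_erase univ (a := (0 : ZMod N)) (by simp [hF0])]
    have hNpos := NeZero.pos N
    refine Finset.sum_bij' (fun a _ => (a : ZMod N)) (fun j _ => j.val) ?_ ?_ ?_ ?_ ?_
    · intro a ha
      rw [Finset.mem_Icc] at ha
      simp only [Finset.mem_erase, Finset.mem_univ, and_true]
      rw [Ne, ZMod.natCast_eq_zero_iff]
      exact Nat.not_dvd_of_pos_of_lt (by omega) (by omega)
    · intro j hj
      have := ZMod.val_lt j
      have h2 : j.val ≠ 0 := by simpa using hj
      rw [Finset.mem_Icc]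
      omega
    · intro a ha
      rw [Finset.mem_Icc] at ha
      exact ZMod.val_cast_of_lt (by omega)
    · intro j _
      simp
    · intro a ha
      rw [Finset.mem_Icc] at ha
      rw [ZMod.val_cast_of_lt (by omega)]
  have hz := hconj (fun a => ZMod.dft Φ (a : ZMod N)) (fun a => halgF _) hS
  have : ZMod.dft Φ = 0 := by
    ext j
    by_cases hj : j = 0
    · rw [hj, hF0]; rfl
    · have h2 : j.val ≠ 0 := by simpa using hj
      have := ZMod.val_lt j
      have h3 := hz j.val (by rw [Finset.mem_Icc]; omega)
      simpa using h3
  exact (LinearEquiv.map_eq_zero_iff _).mp this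

theorem at_most_one_algebraic_deriv (p : ℕ) (hp : p.Prime) (hp5 : 5 < p)
    (hconj : ∀ c : ℕ → ℂ, (∀ a, IsAlgebraic ℚ (c a)) →
      (∑ a ∈ Finset.Icc 1 (p - 1),
        c a * (Real.log (Real.Gamma ((a : ℝ) / p)) : ℂ)) = 0 →
      ∀ a ∈ Finset.Icc 1 (p - 1), c a = 0)
    (r : ℕ) (hr : 2 ≤ r)
    (f : Fin r → ℤ → ℂ)
    (halg : ∀ j (n : ℤ), IsAlgebraic ℚ (f j n))
    (hper : ∀ j (n : ℤ), f j (n + p) = f j n)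
    (hodd : ∀ j (n : ℤ), f j (p - n) = -f j n)
    (hsum : ∀ j, ∑ a ∈ Finset.Icc 1 p, f j a = 0)
    (hindep : ∀ α : Fin r → ℂ, (∀ j, IsAlgebraic ℚ (α j)) →
      (∀ n : ℤ, ∑ j, α j * f j n = 0) → ∀ j, α j = 0)
    (L : Fin r → ℂ → ℂ)
    (hLdiff : ∀ j, Differentiable ℂ (L j))
    (hLser : ∀ j (s : ℂ), 1 < s.re → L j s = ∑' n : ℕ, f j (n + 1) / ((n : ℂ) + 1) ^ s)
    (hLone : ∀ j, L j 1 = 0) :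
    {j : Fin r | IsAlgebraic ℚ (deriv (L j) 1)}.ncard ≤ 1 := by
  have : NeZero p := ⟨hp.ne_zero⟩
  -- periodicity
  have hP : ∀ j (a b : ℤ), (a : ZMod p) = (b : ZMod p) → f j a = f j b := by
    intro j a b hab
    have hper' : Function.Periodic (f j) (p : ℤ) := hper j
    rw [ZMod.intCast_eq_intCast_iff_dvd_sub] at hab
    obtain ⟨k, hk⟩ := hab
    have := hper'.int_mul k a
    rw [← this]
    congr 1
    push_cast
    linarith
  set Φ : Fin r → ZMod p → ℂ := fun j a => f j (a.val : ℤ) with hΦ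
  have hΦf : ∀ j (n : ℤ), Φ j (n : ZMod p) = f j n := fun j n => hP j _ _ (by simp)
  have hΦodd : ∀ j, (Φ j).Odd := by
    intro j a
    have := hodd j (a.val : ℤ)
    rw [← hΦf, ← hΦf j (a.val : ℤ)] at this
    simpa using this
  have hLΦ : ∀ j, L j = ZMod.LFunction (Φ j) := by
    intro j
    have hd := ZMod.differentiable_LFunction_of_sum_zero (aux_sumzero (Φ j) (hΦodd j))
    have hE := AnalyticOnNhd.eqOn_of_preconnected_of_eventuallyEq (z₀ := (2 : ℂ))
      ((hLdiff j).differentiableOn.analyticOnNhd isOpen_univ)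
      (hd.differentiableOn.analyticOnNhd isOpen_univ) isPreconnected_univ (Set.mem_univ _) ?_
    · funext s
      exact hE (Set.mem_univ s)
    have : {s : ℂ | 1 < s.re} ∈ 𝓝 (2 : ℂ) :=
      (isOpen_lt continuous_const Complex.continuous_re).mem_nhds (by simp)
    filter_upwards [this] with s hs
    have hs' : 1 < s.re := hs
    rw [hLser j s hs', ZMod.LFunction_eq_LSeries _ hs', LSeries,
      (ZMod.LSeriesSummable_of_one_lt_re (Φ j) hs').tsum_eq_zero_add, LSeries.term_zero, zero_add]
    refine tsum_congr fun n => ?_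
    rw [LSeries.term_of_ne_zero (Nat.succ_ne_zero n)]
    have := hΦf j (n + 1)
    push_cast at this ⊢
    rw [this]
  -- key: a combination with vanishing derivative is trivial
  have key : ∀ α : Fin r → ℂ, (∀ j, IsAlgebraic ℚ (α j)) →
      ∑ j, α j * deriv (L j) 1 = 0 → ∀ j, α j = 0 := by
    intro α hα hs
    refine hindep α hα ?_
    have hLF : ZMod.LFunction (fun a => ∑ j, α j * Φ j a) = fun s => ∑ j, α j * L j s := by
      funext s
      simp_rw [hLΦ, ZMod.LFunction, sum_mul, mul_sum]
      rw [sum_comm]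
      refine sum_congr rfl fun _ _ => sum_congr rfl fun _ _ => ?_
      ring
    have hzero := aux_core hconj (fun a => ∑ j, α j * Φ j a) ?_ ?_ ?_ ?_
    · intro n
      have := congrFun hzero (n : ZMod p)
      simpa [hΦf] using this
    · intro a
      simp only [← sum_neg_distrib]
      refine sum_congr rfl fun j _ => ?_
      rw [hΦodd j a, mul_neg]
    · exact fun a => aux_alg_sum _ _ fun j _ => (hα j).mul (halg j _)
    · rw [hLF]
      simp [hLone]
    · rw [hLF, ← hs]
      exact HasDerivAt.fun_sum fun j _ => ((hLdiff j 1).hasDerivAt).const_mul _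
  rw [Set.ncard_le_one_iff]
  intro a b ha hb
  by_contra hab
  simp only [Set.mem_ofPred_eq] at ha hb
  have hD : ∀ j, deriv (L j) 1 ≠ 0 := by
    intro j hj
    have := key (fun i => if i = j then 1 else 0)
      (fun i => by split_ifs; exacts [isAlgebraic_one, isAlgebraic_zero]) (by simp [hj]) j
    simp at this
  have := key (fun i => if i = a then deriv (L b) 1 else if i = b then -deriv (L a) 1 else 0)
    (fun i => by split_ifs; exacts [hb, ha.neg, isAlgebraic_zero]) ?_ a
  · simp at this
    exact hD b this
  · rw [Finset.sum_eq_add a b hab]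
    · simp [Ne.symm hab]; ring
    · intro c _ hc
      simp [hc.1, hc.2]
    · simp
    · simp
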